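/- Let ρ = |ψ⟩⟨ψ| be an n-qubit pure state and S ⊆ Fin n nonempty with |S| = s ≥ 1, and let P(q) = tr(ρ |Φ̃_q⟩⟨Φ̃_q|), q ∈ {1,2,3,4}^S, be the product SIC-POVM outcome distribution. Fix ε > 0 and δ ∈ (0,1), set N_B = ⌈8 log(1/δ)⌉ and K_opt = ⌈ (1/2)(16 ε^{−2} (3/2)^s + 1) + (1/2)√( (16 ε^{−2} (3/2)^s − 1)² + 32 ε^{−2} 3^s ) ⌉. Let Q₁, …, Q_{N_B·K_opt} be i.i.d. with distribution P, and for each batch b ∈ {1,…,N_B} define C̄^(b) = 1 − 3^s · Ŝ_b with Ŝ_b = (1/(K_opt(K_opt−1))) Σ_{k ≠ k', (b−1)K_opt < k,k' ≤ bK_opt} 1{Q_k = Q_{k'}}. Then P( |median(C̄^(1), …, C̄^(N_B)) − C_ψ(S)| ≥ ε ) ≤ δ. -/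

import Mathlib

open Matrix MeasureTheory
open scoped BigOperators ComplexConjugate Kronecker

/-- `n`-qubit operators: matrices indexed by functions `Fin n → Fin 2`. -/
abbrev QMat (n : ℕ) : Type := Matrix (Fin n → Fin 2) (Fin n → Fin 2) ℂ

/-- Combine an assignment on `α` and one on its complement into a full index. -/
noncomputable def embedIdx {n : ℕ} (α : Finset (Fin n)) (i : {x : Fin n // x ∈ α} → Fin 2)
    (k : {x : Fin n // x ∉ α} → Fin 2) : Fin n → Fin 2 :=
  fun x => if h : x ∈ α then i ⟨x, h⟩ else k ⟨x, h⟩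

/-- The reduced density matrix on the qubits in `α` (partial trace over the rest). -/
noncomputable def reduced {n : ℕ} (ρ : QMat n) (α : Finset (Fin n)) :
    Matrix ({x : Fin n // x ∈ α} → Fin 2) ({x : Fin n // x ∈ α} → Fin 2) ℂ :=
  fun i j => ∑ k : ({x : Fin n // x ∉ α} → Fin 2), ρ (embedIdx α i k) (embedIdx α j k)

/-- The concentratable entanglement `C_ψ(S) = 1 - 2^{-|S|} ∑_{α ⊆ S} tr(ρ_α²)`. -/
noncomputable def CE {n : ℕ} (ρ : QMat n) (S : Finset (Fin n)) : ℝ :=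
  1 - (1 / 2 : ℝ) ^ S.card *
    ∑ α ∈ S.powerset, (Matrix.trace (reduced ρ α * reduced ρ α)).re

/-- Tensor product of single-qubit operators on the qubits in `S`, identity elsewhere. -/
noncomputable def localOp {n : ℕ} (S : Finset (Fin n))
    (V : {i : Fin n // i ∈ S} → Matrix (Fin 2) (Fin 2) ℂ) : QMat n :=
  fun x y => ∏ i : Fin n,
    if h : i ∈ S then V ⟨i, h⟩ (x i) (y i)
    else (if x i = y i then 1 else 0)

/-- The four SIC vectors `φ₁, …, φ₄` in `ℂ²`. -/
noncomputable def sicVec : Fin 4 → Fin 2 → ℂ :=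
  ![![1, 0],
    ![((1 / Real.sqrt 3 : ℝ) : ℂ), ((Real.sqrt (2/3) : ℝ) : ℂ)],
    ![((1 / Real.sqrt 3 : ℝ) : ℂ),
      ((Real.sqrt (2/3) : ℝ) : ℂ) * Complex.exp (2 * Real.pi * Complex.I / 3)],
    ![((1 / Real.sqrt 3 : ℝ) : ℂ),
      ((Real.sqrt (2/3) : ℝ) : ℂ) * Complex.exp (4 * Real.pi * Complex.I / 3)]]

/-- The rescaled SIC-POVM vectors `φ̃ᵢ = φᵢ/√2`. -/
noncomputable def sicTilde (i : Fin 4) : Fin 2 → ℂ :=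
  fun a => sicVec i a / ((Real.sqrt 2 : ℝ) : ℂ)

/-- The product SIC-POVM element `|Φ̃_q⟩⟨Φ̃_q| = ⊗_{i∈S} |φ̃_{qᵢ}⟩⟨φ̃_{qᵢ}|` on the qubits
in `S`, identity elsewhere. -/
noncomputable def sicProj {n : ℕ} (S : Finset (Fin n))
    (q : {i : Fin n // i ∈ S} → Fin 4) : QMat n :=
  localOp S (fun i => Matrix.vecMulVec (sicTilde (q i)) (star (sicTilde (q i))))

/-- The SIC-POVM outcome probability `P(q) = tr(ρ |Φ̃_q⟩⟨Φ̃_q|)`. -/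
noncomputable def sicBorn {n : ℕ} (ρ : QMat n) (S : Finset (Fin n))
    (q : {i : Fin n // i ∈ S} → Fin 4) : ℝ :=
  (Matrix.trace (ρ * sicProj S q)).re

/-- The product SIC-POVM outcome distribution, as a measure on `{1,2,3,4}^S`. -/
noncomputable def sicMeasure {n : ℕ} (ρ : QMat n) (S : Finset (Fin n)) :
    Measure ({i : Fin n // i ∈ S} → Fin 4) :=
  ∑ q : ({i : Fin n // i ∈ S} → Fin 4), ENNReal.ofReal (sicBorn ρ S q) • Measure.dirac q

/-- `m₀` is a median of `x₁, …, x_m`: at least half of the `xᵢ` satisfy `xᵢ ≤ m₀` and at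
least half satisfy `xᵢ ≥ m₀`. -/
def IsMedian {m : ℕ} (x : Fin m → ℝ) (m₀ : ℝ) : Prop :=
  m ≤ 2 * (Finset.univ.filter fun i => x i ≤ m₀).card ∧
  m ≤ 2 * (Finset.univ.filter fun i => m₀ ≤ x i).card

theorem sum_prod_pi {ι Q R : Type*} [Fintype ι] [DecidableEq ι] [Fintype Q] [CommSemiring R]
    (F : ι → Q → R) : ∑ q : ι → Q, ∏ i, F i (q i) = ∏ i, ∑ c, F i c := by
  rw [← Fintype.piFinset_univ, Finset.prod_univ_sum]

section Iid

variable {ι Q : Type*}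

/-- Pairwise collision indicator. -/
noncomputable def collision [DecidableEq Q] (k l : ι) (η : ι → Q) : ℝ := if η k = η l then 1 else 0

theorem collision_comm [DecidableEq Q] (k l : ι) : (collision k l : (ι → Q) → ℝ) = collision l k := by
  funext η; simp only [collision, eq_comm]

variable [Fintype ι] [DecidableEq ι] [Fintype Q]

/-- The mean of `F` over `ι`-indexed i.i.d. samples with weights `P`. -/
noncomputable def iidMean (P : Q → ℝ) (F : (ι → Q) → ℝ) : ℝ :=
  ∑ η : ι → Q, (∏ k, P (η k)) * F η

theorem iidMean_sum {κ : Type*} (P : Q → ℝ) (s : Finset κ) (F : κ → (ι → Q) → ℝ) :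
    iidMean P (fun η => ∑ c ∈ s, F c η) = ∑ c ∈ s, iidMean P (F c) := by
  simp only [iidMean, Finset.mul_sum]
  exact Finset.sum_comm

theorem iidMean_mono {P : Q → ℝ} (hP0 : ∀ q, 0 ≤ P q) {F G : (ι → Q) → ℝ}
    (h : ∀ η, F η ≤ G η) : iidMean P F ≤ iidMean P G :=
  Finset.sum_le_sum fun η _ =>
    mul_le_mul_of_nonneg_left (h η) (Finset.prod_nonneg fun k _ => hP0 (η k))

theorem iidMean_sub {P : Q → ℝ} (F G : (ι → Q) → ℝ) :
    iidMean P (fun η => F η - G η) = iidMean P F - iidMean P G := by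
  simp [iidMean, mul_sub]

theorem iidMean_const_mul {P : Q → ℝ} (c : ℝ) (F : (ι → Q) → ℝ) :
    iidMean P (fun η => c * F η) = c * iidMean P F := by
  simp only [iidMean, Finset.mul_sum]
  exact Finset.sum_congr rfl fun η _ => by ring

variable [DecidableEq Q]

theorem iidMean_prod_indicator {P : Q → ℝ} (hP1 : ∑ q, P q = 1) (A : Finset ι) (f : ι → Q) :
    iidMean P (fun η => ∏ k ∈ A, if η k = f k then (1 : ℝ) else 0) = ∏ k ∈ A, P (f k) := by
  have key : ∀ η : ι → Q, (∏ k, P (η k)) * ∏ k ∈ A, (if η k = f k then (1 : ℝ) else 0)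
      = ∏ k, (P (η k) * if k ∈ A then (if η k = f k then (1 : ℝ) else 0) else 1) := by
    intro η
    rw [Finset.prod_mul_distrib, Fintype.prod_ite_mem]
  simp only [iidMean, key]
  rw [← Fintype.piFinset_univ, ← Finset.prod_univ_sum (fun _ => Finset.univ)
    (fun k q => P q * if k ∈ A then (if q = f k then (1 : ℝ) else 0) else 1),
    ← Fintype.prod_ite_mem A]
  refine Finset.prod_congr rfl fun k _ => ?_
  by_cases hk : k ∈ A <;> simp [hk, hP1]

theorem iidMean_one {P : Q → ℝ} (hP1 : ∑ q, P q = 1) :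
    iidMean P (fun _ : ι → Q => 1) = 1 := by
  by_cases h : Nonempty (ι → Q)
  · obtain ⟨f⟩ := h
    simpa using iidMean_prod_indicator hP1 (∅ : Finset ι) f
  · rcases isEmpty_or_nonempty Q with hQ | ⟨⟨q⟩⟩
    · simp at hP1
    · exact absurd ⟨fun _ => q⟩ h

theorem collision_eq_sum (k l : ι) (η : ι → Q) : collision k l η =
    ∑ c : Q, (if η k = c then (1 : ℝ) else 0) * (if η l = c then 1 else 0) := by
  simp [collision, eq_comm]

theorem iidMean_collision {P : Q → ℝ} (hP1 : ∑ q, P q = 1) {k l : ι} (h : k ≠ l) :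
    iidMean P (collision k l) = ∑ q, P q ^ 2 := by
  have : (collision k l : (ι → Q) → ℝ) = fun η =>
      ∑ c : Q, ∏ j ∈ ({k, l} : Finset ι), if η j = c then (1 : ℝ) else 0 := by
    funext η
    simp only [Finset.prod_pair h, collision_eq_sum]
  rw [this, iidMean_sum]
  refine Finset.sum_congr rfl fun c _ => ?_
  rw [iidMean_prod_indicator hP1 _ (fun _ => c), Finset.prod_pair h, sq]

theorem iidMean_collision_mul_of_common {P : Q → ℝ} (hP1 : ∑ q, P q = 1) {k l m : ι}
    (hkl : k ≠ l) (hkm : k ≠ m) (hlm : l ≠ m) :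
    iidMean P (fun η => collision k l η * collision k m η) = ∑ q, P q ^ 3 := by
  have : (fun η : ι → Q => collision k l η * collision k m η) = fun η =>
      ∑ c : Q, ∏ j ∈ ({k, l, m} : Finset ι), if η j = c then (1 : ℝ) else 0 := by
    funext η
    have hk : k ∉ ({l, m} : Finset ι) := by simp [hkl, hkm]
    simp only [Finset.prod_insert hk, Finset.prod_pair hlm, collision]
    simp only [mul_ite, mul_one, mul_zero, Finset.sum_ite_eq, Finset.mem_univ, if_true]
    split_ifs <;> simp_all
  rw [this, iidMean_sum]
  refine Finset.sum_congr rfl fun c _ => ?_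
  rw [iidMean_prod_indicator hP1 _ (fun _ => c), Finset.prod_insert (by simp [hkl, hkm]),
    Finset.prod_pair hlm]
  ring

theorem iidMean_collision_mul_of_disjoint {P : Q → ℝ} (hP1 : ∑ q, P q = 1) {k l m j : ι}
    (hkl : k ≠ l) (hmj : m ≠ j) (hkm : k ≠ m) (hkj : k ≠ j) (hlm : l ≠ m) (hlj : l ≠ j) :
    iidMean P (fun η => collision k l η * collision m j η) = (∑ q, P q ^ 2) ^ 2 := by
  have hk : k ∉ ({l, m, j} : Finset ι) := by simp [hkl, hkm, hkj]
  have hl : l ∉ ({m, j} : Finset ι) := by simp [hlm, hlj]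
  have : (fun η : ι → Q => collision k l η * collision m j η) = fun η =>
      ∑ c : Q, ∑ d : Q, ∏ i ∈ ({k, l, m, j} : Finset ι),
        if η i = (if i = k ∨ i = l then c else d) then (1 : ℝ) else 0 := by
    funext η
    rw [collision_eq_sum, collision_eq_sum, Finset.sum_mul_sum]
    refine Finset.sum_congr rfl fun c _ => Finset.sum_congr rfl fun d _ => ?_
    rw [Finset.prod_insert hk, Finset.prod_insert hl, Finset.prod_pair hmj]
    simp only [hkm.symm, hkj.symm, hlm.symm, hlj.symm, true_or, or_true, or_self, if_true,
      if_false]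
    ring
  rw [this, iidMean_sum]
  simp only [iidMean_sum]
  rw [sq, Finset.sum_mul_sum]
  refine Finset.sum_congr rfl fun c _ => Finset.sum_congr rfl fun d _ => ?_
  rw [iidMean_prod_indicator hP1 _ (fun i => if i = k ∨ i = l then c else d),
    Finset.prod_insert hk, Finset.prod_insert hl, Finset.prod_pair hmj]
  simp [hkm.symm, hkj.symm, hlm.symm, hlj.symm]
  ring

theorem collision_covariance {P : Q → ℝ} (hP1 : ∑ q, P q = 1) {k l m j : ι}
    (hkl : k ≠ l) (hmj : m ≠ j) :
    iidMean P (fun η => (collision k l η - ∑ q, P q ^ 2) * (collision m j η - ∑ q, P q ^ 2))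
      = iidMean P (fun η => collision k l η * collision m j η) - (∑ q, P q ^ 2) ^ 2 := by
  set θ := ∑ q, P q ^ 2 with hθ
  have h1 := iidMean_collision hP1 hkl
  have h2 := iidMean_collision hP1 hmj
  have h3 : iidMean P (fun _ : ι → Q => (1 : ℝ)) = 1 := iidMean_one hP1
  have : (fun η : ι → Q => (collision k l η - θ) * (collision m j η - θ)) = fun η =>
      (collision k l η * collision m j η - θ * collision k l η)
        - (θ * collision m j η - θ ^ 2 * 1) := by
    funext η; ring
  rw [this, iidMean_sub, iidMean_sub, iidMean_sub, iidMean_const_mul, iidMean_const_mul,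
    iidMean_const_mul, h1, h2, h3, ← hθ]
  ring

theorem collision_covariance_le {P : Q → ℝ} (hP0 : ∀ q, 0 ≤ P q) (hP1 : ∑ q, P q = 1)
    {k l m j : ι} (hkl : k ≠ l) (hmj : m ≠ j) :
    iidMean P (fun η => (collision k l η - ∑ q, P q ^ 2) * (collision m j η - ∑ q, P q ^ 2))
      ≤ (∑ q, P q ^ 3) * ((if m = k then 1 else 0) + (if m = l then 1 else 0)
          + (if j = k then 1 else 0) + (if j = l then 1 else 0))
        + (∑ q, P q ^ 2) * ((if (m, j) = (k, l) then 1 else 0)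
          + (if (m, j) = (l, k) then 1 else 0)) := by
  rw [collision_covariance hP1 hkl hmj]
  have hτ : 0 ≤ ∑ q, P q ^ 3 := Finset.sum_nonneg fun q _ => pow_nonneg (hP0 q) 3
  have hsq := sq_nonneg (∑ q, P q ^ 2)
  have hidem : (fun η : ι → Q => collision k l η * collision k l η) = collision k l := by
    funext η; simp [collision]
  by_cases h1 : m = k
  · subst h1
    by_cases h2 : j = l
    · subst h2
      rw [hidem, iidMean_collision hP1 hkl]
      simp [hkl, hkl.symm]
      linarith
    · rw [iidMean_collision_mul_of_common hP1 hkl hmj (Ne.symm h2)]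
      simp [hkl, h2, hmj.symm]
      linarith
  by_cases h2 : m = l
  · subst h2
    by_cases h3 : j = k
    · subst h3
      rw [collision_comm m j, hidem, iidMean_collision hP1 hkl]
      simp [hkl, hkl.symm]
      linarith
    · rw [collision_comm k m, iidMean_collision_mul_of_common hP1 hkl.symm hmj (Ne.symm h3)]
      simp [hkl.symm, h3, hmj.symm]
      linarith
  by_cases h3 : j = k
  · subst h3
    rw [collision_comm m j, iidMean_collision_mul_of_common hP1 hkl (Ne.symm h1) (Ne.symm h2)]
    simp [hkl, h1, h2]
    linarith
  by_cases h4 : j = l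
  · subst h4
    rw [collision_comm m j, collision_comm k j,
      iidMean_collision_mul_of_common hP1 hkl.symm (Ne.symm h2) (Ne.symm h1)]
    simp [hkl.symm, h1, h2]
    linarith
  rw [iidMean_collision_mul_of_disjoint hP1 hkl hmj (Ne.symm h1) (Ne.symm h3) (Ne.symm h2)
    (Ne.symm h4)]
  simp [h1, h2, h3, h4]

theorem sum_offDiag_fst (f : ι → ℝ) :
    ∑ r ∈ (Finset.univ : Finset ι).offDiag, f r.1 = ((Fintype.card ι : ℝ) - 1) * ∑ k, f k := by
  have h : (Finset.univ : Finset ι).offDiag = Finset.univ.filter fun r : ι × ι => r.1 ≠ r.2 := by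
    ext r; simp
  rw [h, Finset.sum_filter, Fintype.sum_prod_type, Finset.mul_sum]
  refine Finset.sum_congr rfl fun k _ => ?_
  have h2 : ∀ l : ι, (if k ≠ l then f k else 0) = f k - if k = l then f k else 0 := by
    intro l; by_cases hl : k = l <;> simp [hl]
  simp only [h2, Finset.sum_sub_distrib]
  simp
  ring

theorem sum_offDiag_snd (f : ι → ℝ) :
    ∑ r ∈ (Finset.univ : Finset ι).offDiag, f r.2 = ((Fintype.card ι : ℝ) - 1) * ∑ k, f k := by
  rw [← sum_offDiag_fst f]
  exact Finset.sum_nbij' Prod.swap Prod.swap (by simp [eq_comm]) (by simp [eq_comm])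
    (by simp) (by simp) (by simp)

theorem iidMean_sq_collision_sum_le {P : Q → ℝ} (hP0 : ∀ q, 0 ≤ P q) (hP1 : ∑ q, P q = 1) :
    iidMean P (fun η : ι → Q => (∑ p ∈ (Finset.univ : Finset ι).offDiag,
        (collision p.1 p.2 η - ∑ q, P q ^ 2)) ^ 2)
      ≤ (Fintype.card ι : ℝ) * ((Fintype.card ι : ℝ) - 1) *
        (4 * ((Fintype.card ι : ℝ) - 1) * ∑ q, P q ^ 3 + 2 * ∑ q, P q ^ 2) := by
  simp only [sq (∑ p ∈ (Finset.univ : Finset ι).offDiag, _), Finset.sum_mul_sum]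
  rw [iidMean_sum]
  simp only [iidMean_sum]
  have hθ : 0 ≤ ∑ q, P q ^ 2 := Finset.sum_nonneg fun q _ => pow_nonneg (hP0 q) 2
  have hle : ∀ p ∈ (Finset.univ : Finset ι).offDiag,
      ∑ r ∈ (Finset.univ : Finset ι).offDiag,
        iidMean P (fun η : ι → Q => (collision p.1 p.2 η - ∑ q, P q ^ 2) *
          (collision r.1 r.2 η - ∑ q, P q ^ 2))
      ≤ 4 * ((Fintype.card ι : ℝ) - 1) * ∑ q, P q ^ 3 + 2 * ∑ q, P q ^ 2 := by
    rintro ⟨k, l⟩ hp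
    have hkl : k ≠ l := by simpa using hp
    calc _ ≤ ∑ r ∈ (Finset.univ : Finset ι).offDiag,
            ((∑ q, P q ^ 3) * ((if r.1 = k then 1 else 0) + (if r.1 = l then 1 else 0)
              + (if r.2 = k then 1 else 0) + (if r.2 = l then 1 else 0))
            + (∑ q, P q ^ 2) * ((if r = (k, l) then 1 else 0)
              + (if r = (l, k) then 1 else 0))) :=
          Finset.sum_le_sum fun r hr => collision_covariance_le hP0 hP1 hkl (by simpa using hr)
      _ = _ := by
          rw [Finset.sum_add_distrib, ← Finset.mul_sum, ← Finset.mul_sum]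
          simp only [Finset.sum_add_distrib]
          rw [sum_offDiag_fst (fun i => if i = k then 1 else 0),
            sum_offDiag_fst (fun i => if i = l then 1 else 0),
            sum_offDiag_snd (fun i => if i = k then 1 else 0),
            sum_offDiag_snd (fun i => if i = l then 1 else 0)]
          simp [hkl, hkl.symm]
          ring
  refine (Finset.sum_le_sum hle).trans (le_of_eq ?_)
  rw [Finset.sum_const, nsmul_eq_mul]
  have := sum_offDiag_fst (ι := ι) (fun _ => (1 : ℝ))
  simp only [Finset.sum_const, nsmul_eq_mul, mul_one, Finset.card_univ] at this
  rw [this]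
  ring

end Iid

section SingleQubit

/-- The single-qubit SIC effects in explicit form. -/
theorem exists_sic_effects :
    ∃ γ w : ℂ, 18 * γ ^ 2 = 1 ∧ 1 + w + w ^ 2 = 0 ∧ ∀ i,
      Matrix.vecMulVec (sicTilde i) (star (sicTilde i)) =
        (![!![1 / 2, 0; 0, 0], !![1 / 6, γ; γ, 1 / 3], !![1 / 6, γ * w ^ 2; γ * w, 1 / 3],
          !![1 / 6, γ * w; γ * w ^ 2, 1 / 3]] : Fin 4 → Matrix (Fin 2) (Fin 2) ℂ) i := by
  set w : ℂ := Complex.exp (2 * Real.pi * Complex.I / 3) with hw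
  have hw2 : Complex.exp (4 * Real.pi * Complex.I / 3) = w ^ 2 := by
    rw [hw, ← Complex.exp_nat_mul]
    congr 1
    push_cast
    ring
  have hprim : IsPrimitiveRoot w 3 := by
    have := Complex.isPrimitiveRoot_exp 3 (by norm_num)
    simpa [hw] using this
  have hw3 : w ^ 3 = 1 := hprim.pow_eq_one
  have hw1 : 1 + w + w ^ 2 = 0 := by
    have := hprim.geom_sum_eq_zero (by norm_num)
    simpa [Finset.sum_range_succ] using this
  have hcw : (starRingEnd ℂ) w = w ^ 2 := by
    rw [hw, ← Complex.exp_conj, ← Complex.exp_nat_mul, Complex.exp_eq_exp_iff_exists_int]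
    refine ⟨-1, ?_⟩
    simp [Complex.conj_ofNat]
    ring
  have hc2 : (starRingEnd ℂ) w ^ 2 = w := by
    rw [hcw]; linear_combination w * hw3
  obtain ⟨a, ha⟩ : ∃ a : ℂ, a = ((1 / Real.sqrt 3 : ℝ) : ℂ) := ⟨_, rfl⟩
  obtain ⟨b, hb⟩ : ∃ b : ℂ, b = ((Real.sqrt (2 / 3) : ℝ) : ℂ) := ⟨_, rfl⟩
  obtain ⟨c, hc⟩ : ∃ c : ℂ, c = ((Real.sqrt 2 : ℝ) : ℂ) := ⟨_, rfl⟩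
  have ha2 : 3 * a ^ 2 = 1 := by
    rw [ha]; norm_cast; rw [div_pow, Real.sq_sqrt (by norm_num)]; norm_num
  have hb2 : 3 * b ^ 2 = 2 := by
    rw [hb]; norm_cast; rw [Real.sq_sqrt (by norm_num)]; norm_num
  have hc2' : c ^ 2 = 2 := by
    rw [hc]; norm_cast; rw [Real.sq_sqrt (by norm_num)]
  have hac : (starRingEnd ℂ) a = a := by rw [ha, Complex.conj_ofReal]
  have hbc : (starRingEnd ℂ) b = b := by rw [hb, Complex.conj_ofReal]
  have hcc : (starRingEnd ℂ) c = c := by rw [hc, Complex.conj_ofReal]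
  have hc0 : c ≠ 0 := by rintro rfl; norm_num at hc2'
  have hvec : sicVec = ![![1, 0], ![a, b], ![a, b * w], ![a, b * w ^ 2]] := by
    rw [sicVec, hw2, ← ha, ← hb, ← hw]
  refine ⟨a * b / 2, w, by linear_combination (3 / 2 * b ^ 2) * ha2 + hb2 / 2, hw1, fun i => ?_⟩
  ext x y
  fin_cases i <;> fin_cases x <;> fin_cases y <;>
    simp [Matrix.vecMulVec_apply, sicTilde, hvec, ← hc, hac, hbc, hcc, hcw] <;>
    field_simp <;> grind

theorem sum_sic_effect (a b : Fin 2) :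
    ∑ i, Matrix.vecMulVec (sicTilde i) (star (sicTilde i)) a b = if a = b then 1 else 0 := by
  obtain ⟨γ, w, hγ, hw, h⟩ := exists_sic_effects
  simp only [h, Fin.sum_univ_four]
  fin_cases a <;> fin_cases b <;> simp <;> grind

theorem sum_sic_effect_mul (a b c d : Fin 2) :
    ∑ i, Matrix.vecMulVec (sicTilde i) (star (sicTilde i)) a b *
        Matrix.vecMulVec (sicTilde i) (star (sicTilde i)) c d
      = 1 / 6 * ((if a = d ∧ c = b then 1 else 0) + if a = b ∧ c = d then 1 else 0) := by
  obtain ⟨γ, w, hγ, hw, h⟩ := exists_sic_effects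
  simp only [h, Fin.sum_univ_four]
  fin_cases a <;> fin_cases b <;> fin_cases c <;> fin_cases d <;> simp <;> grind

theorem sum_norm_sq_sicTilde (i : Fin 4) : ∑ a, ‖sicTilde i a‖ ^ 2 = 1 / 2 := by
  obtain ⟨γ, w, hγ, hw, h⟩ := exists_sic_effects
  have key : ∀ a, ((‖sicTilde i a‖ ^ 2 : ℝ) : ℂ) =
      Matrix.vecMulVec (sicTilde i) (star (sicTilde i)) a a := by
    intro a
    rw [Matrix.vecMulVec_apply, Pi.star_apply, Complex.star_def, Complex.mul_conj']
    push_cast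
    rfl
  have : ((∑ a, ‖sicTilde i a‖ ^ 2 : ℝ) : ℂ) = ((1 / 2 : ℝ) : ℂ) := by
    rw [Complex.ofReal_sum]
    simp only [key, h, Fin.sum_univ_two]
    fin_cases i <;> simp <;> norm_num
  exact_mod_cast this

end SingleQubit

section CauchySchwarz

theorem norm_sum_mul_sq_le {κ : Type*} (s : Finset κ) (a b : κ → ℂ) :
    ‖∑ k ∈ s, a k * b k‖ ^ 2 ≤ (∑ k ∈ s, ‖a k‖ ^ 2) * ∑ k ∈ s, ‖b k‖ ^ 2 :=
  calc ‖∑ k ∈ s, a k * b k‖ ^ 2 ≤ (∑ k ∈ s, ‖a k‖ * ‖b k‖) ^ 2 := by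
        gcongr
        exact (norm_sum_le _ _).trans (le_of_eq (by simp))
    _ ≤ _ := Finset.sum_mul_sq_le_sq_mul_sq s _ _

end CauchySchwarz

section Tomography

variable {n : ℕ}

theorem sum_eq_sum_embedIdx {M : Type*} [AddCommMonoid M] (α : Finset (Fin n))
    (f : (Fin n → Fin 2) → M) : ∑ x, f x = ∑ i, ∑ k, f (embedIdx α i k) := by
  rw [← (Equiv.piEquivPiSubtypeProd (fun i => i ∈ α) (fun _ : Fin n => Fin 2)).symm.sum_comp f,
    Fintype.sum_prod_type]
  rfl

theorem sum_norm_sq_eq_one {ψ : (Fin n → Fin 2) → ℂ} (hψ : (∑ x, star (ψ x) * ψ x) = 1) :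
    ∑ x, ‖ψ x‖ ^ 2 = 1 := by
  have : ((∑ x, ‖ψ x‖ ^ 2 : ℝ) : ℂ) = 1 := by
    rw [← hψ]
    push_cast
    refine Finset.sum_congr rfl fun x _ => ?_
    rw [Complex.star_def, Complex.conj_mul']
  exact_mod_cast this

theorem reduced_pure_apply (ψ : (Fin n → Fin 2) → ℂ) (α : Finset (Fin n))
    (i j : {x : Fin n // x ∈ α} → Fin 2) :
    reduced (Matrix.vecMulVec ψ (star ψ)) α i j =
      ∑ k, ψ (embedIdx α i k) * star (ψ (embedIdx α j k)) := rfl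

theorem purity_re_le_one {ψ : (Fin n → Fin 2) → ℂ} (hψ : (∑ x, star (ψ x) * ψ x) = 1)
    (α : Finset (Fin n)) :
    (Matrix.trace (reduced (Matrix.vecMulVec ψ (star ψ)) α *
      reduced (Matrix.vecMulVec ψ (star ψ)) α)).re ≤ 1 := by
  set R := reduced (Matrix.vecMulVec ψ (star ψ)) α with hR
  set r : ({x : Fin n // x ∈ α} → Fin 2) → ℝ := fun i => ∑ k, ‖ψ (embedIdx α i k)‖ ^ 2 with hr
  have hr1 : ∑ i, r i = 1 := by
    rw [← sum_norm_sq_eq_one hψ, sum_eq_sum_embedIdx α]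
  have hle : ∀ i j, ‖R i j‖ ^ 2 ≤ r i * r j := by
    intro i j
    rw [hR, reduced_pure_apply]
    simpa [hr] using norm_sum_mul_sq_le Finset.univ (fun k => ψ (embedIdx α i k))
      (fun k => star (ψ (embedIdx α j k)))
  calc (Matrix.trace (R * R)).re ≤ ‖Matrix.trace (R * R)‖ := Complex.re_le_norm _
    _ = ‖∑ i, ∑ j, R i j * R j i‖ := by simp [Matrix.trace, Matrix.mul_apply]
    _ ≤ ∑ i, ∑ j, ‖R i j * R j i‖ :=
        (norm_sum_le _ _).trans (Finset.sum_le_sum fun i _ => norm_sum_le _ _)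
    _ ≤ ∑ i, ∑ j, r i * r j := by
        refine Finset.sum_le_sum fun i _ => Finset.sum_le_sum fun j _ => ?_
        rw [norm_mul]
        nlinarith [hle i j, hle j i, sq_nonneg (‖R i j‖ - ‖R j i‖)]
    _ = 1 := by rw [← Finset.sum_mul_sum, hr1, one_mul]

theorem trace_reduced_sq (ψ : (Fin n → Fin 2) → ℂ) (α : Finset (Fin n)) :
    Matrix.trace (reduced (Matrix.vecMulVec ψ (star ψ)) α *
        reduced (Matrix.vecMulVec ψ (star ψ)) α) =
      ∑ x, ∑ x', ψ x * ψ x' * star (ψ (α.piecewise x' x)) * star (ψ (α.piecewise x x')) := by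
  have hpw : ∀ (i j : {x : Fin n // x ∈ α} → Fin 2) (k l : {x : Fin n // x ∉ α} → Fin 2),
      α.piecewise (embedIdx α i k) (embedIdx α j l) = embedIdx α i l := by
    intro i j k l
    funext x
    by_cases hx : x ∈ α <;> simp [embedIdx, hx]
  rw [sum_eq_sum_embedIdx α]
  simp only [sum_eq_sum_embedIdx α (fun x' => _ * ψ x' * _ * _), hpw, Matrix.trace,
    Matrix.diag_apply, Matrix.mul_apply, reduced_pure_apply, Finset.sum_mul_sum]
  refine Finset.sum_congr rfl fun i _ => ?_
  rw [Finset.sum_comm]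
  refine Finset.sum_congr rfl fun k _ => Finset.sum_congr rfl fun j _ =>
    Finset.sum_congr rfl fun l _ => ?_
  ring

theorem localOp_apply (S : Finset (Fin n))
    (V : {i : Fin n // i ∈ S} → Matrix (Fin 2) (Fin 2) ℂ) (x y : Fin n → Fin 2) :
    localOp S V x y = (∏ i : {i : Fin n // i ∈ S}, V i (x i) (y i)) *
      ∏ i : {i : Fin n // i ∉ S}, if x i = y i then 1 else 0 := by
  rw [localOp, Fintype.prod_dite]
  congr 1
  exact Finset.prod_congr (by ext; simp) fun _ _ => rfl

theorem prod_mem_eq (S : Finset (Fin n)) (f : Fin n → ℂ) :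
    ∏ i : {i : Fin n // i ∈ S}, f i = ∏ i ∈ S, f i := Finset.prod_coe_sort S f

theorem prod_notMem_eq (S : Finset (Fin n)) (f : Fin n → ℂ) :
    ∏ i : {i : Fin n // i ∉ S}, f i = ∏ i ∈ Sᶜ, f i :=
  (Finset.prod_subtype _ (by simp) f).symm

theorem sum_sicProj (S : Finset (Fin n)) (x y : Fin n → Fin 2) :
    ∑ q, sicProj S q x y = if x = y then 1 else 0 := by
  simp only [sicProj, localOp_apply]
  rw [← Finset.sum_mul, sum_prod_pi (fun (i : {i : Fin n // i ∈ S}) c =>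
    Matrix.vecMulVec (sicTilde c) (star (sicTilde c)) (x i) (y i))]
  simp only [sum_sic_effect]
  rw [prod_mem_eq S (fun i => if x i = y i then (1 : ℂ) else 0),
    prod_notMem_eq S (fun i => if x i = y i then (1 : ℂ) else 0),
    Finset.prod_mul_prod_compl, Finset.prod_ite_zero]
  simp [funext_iff]

theorem sum_sicProj_mul (S : Finset (Fin n)) (x y x' y' : Fin n → Fin 2) :
    ∑ q, sicProj S q y x * sicProj S q y' x' = (1 / 6 : ℂ) ^ S.card *
      ∑ α ∈ S.powerset, if y = α.piecewise x' x ∧ y' = α.piecewise x x' then 1 else 0 := by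
  have hterm : ∀ α ∈ S.powerset,
      (if y = α.piecewise x' x ∧ y' = α.piecewise x x' then (1 : ℂ) else 0)
      = ((∏ i ∈ α, if y i = x' i ∧ y' i = x i then (1 : ℂ) else 0) *
          ∏ i ∈ S \ α, if y i = x i ∧ y' i = x' i then (1 : ℂ) else 0) *
        ∏ i ∈ Sᶜ, if y i = x i ∧ y' i = x' i then (1 : ℂ) else 0 := by
    intro α hα
    have hα' : α ⊆ S := Finset.mem_powerset.1 hα
    have hiff : (y = α.piecewise x' x ∧ y' = α.piecewise x x') ↔
        ((∀ i ∈ α, y i = x' i ∧ y' i = x i) ∧ ∀ i ∈ S \ α, y i = x i ∧ y' i = x' i) ∧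
          ∀ i ∈ Sᶜ, y i = x i ∧ y' i = x' i := by
      simp only [funext_iff, ← forall_and, Finset.mem_sdiff, Finset.mem_compl]
      refine forall_congr' fun i => ?_
      have := @hα' i
      by_cases hi : i ∈ α <;> by_cases hS : i ∈ S <;> simp_all
    simp only [Finset.prod_ite_zero, Finset.prod_const_one]
    rw [if_congr hiff rfl rfl]
    split_ifs <;> first | (simp; done) | (exfalso; tauto)
  rw [Finset.sum_congr rfl hterm, ← Finset.sum_mul, ← Finset.prod_add]
  simp only [sicProj, localOp_apply]
  have hsplit : ∀ q : {i : Fin n // i ∈ S} → Fin 4,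
      ((∏ i, Matrix.vecMulVec (sicTilde (q i)) (star (sicTilde (q i))) (y i) (x i)) *
        ∏ i : {i : Fin n // i ∉ S}, if y i = x i then (1 : ℂ) else 0) *
      ((∏ i, Matrix.vecMulVec (sicTilde (q i)) (star (sicTilde (q i))) (y' i) (x' i)) *
        ∏ i : {i : Fin n // i ∉ S}, if y' i = x' i then (1 : ℂ) else 0) =
      (∏ i, Matrix.vecMulVec (sicTilde (q i)) (star (sicTilde (q i))) (y i) (x i) *
        Matrix.vecMulVec (sicTilde (q i)) (star (sicTilde (q i))) (y' i) (x' i)) *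
        ∏ i : {i : Fin n // i ∉ S}, if y i = x i ∧ y' i = x' i then (1 : ℂ) else 0 := by
    intro q
    have : ∀ i : Fin n, (if y i = x i ∧ y' i = x' i then (1 : ℂ) else 0) =
        (if y i = x i then 1 else 0) * if y' i = x' i then 1 else 0 := by
      intro i; by_cases h : y i = x i <;> by_cases h' : y' i = x' i <;> simp [h, h']
    simp only [this, Finset.prod_mul_distrib]
    ring
  simp only [hsplit]
  rw [← Finset.sum_mul, sum_prod_pi (fun (i : {i : Fin n // i ∈ S}) c =>
    Matrix.vecMulVec (sicTilde c) (star (sicTilde c)) (y i) (x i) *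
      Matrix.vecMulVec (sicTilde c) (star (sicTilde c)) (y' i) (x' i))]
  simp only [sum_sic_effect_mul, Finset.prod_mul_distrib, Finset.prod_const]
  rw [prod_notMem_eq S (fun i => if y i = x i ∧ y' i = x' i then (1 : ℂ) else 0),
    prod_mem_eq S (fun i => (if y i = x' i ∧ y' i = x i then (1 : ℂ) else 0) +
      if y i = x i ∧ y' i = x' i then 1 else 0)]
  simp [mul_assoc]

theorem trace_pure_mul (ψ : (Fin n → Fin 2) → ℂ) (M : QMat n) :
    Matrix.trace (Matrix.vecMulVec ψ (star ψ) * M) = ∑ x, ∑ y, ψ x * star (ψ y) * M y x := by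
  simp [Matrix.trace, Matrix.mul_apply, Matrix.vecMulVec_apply]

/-- The product SIC amplitudes give the Born probabilities as sums of squares. -/
theorem trace_pure_mul_sicProj (ψ : (Fin n → Fin 2) → ℂ) (S : Finset (Fin n))
    (q : {i : Fin n // i ∈ S} → Fin 4) :
    Matrix.trace (Matrix.vecMulVec ψ (star ψ) * sicProj S q) =
      ((∑ k, ‖∑ u, ψ (embedIdx S u k) * star (∏ i, sicTilde (q i) (u i))‖ ^ 2 : ℝ) : ℂ) := by
  have hin : ∀ u k, ∀ i : {i : Fin n // i ∈ S}, embedIdx S u k i = u i := by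
    intro u k i; simp [embedIdx]
  have hout : ∀ u k, ∀ i : {i : Fin n // i ∉ S}, embedIdx S u k i = k i := by
    intro u k i; simp [embedIdx, i.2]
  have hdelta : ∀ k l : {i : Fin n // i ∉ S} → Fin 2,
      (∏ i, if l i = k i then (1 : ℂ) else 0) = if k = l then 1 else 0 := by
    intro k l
    rw [Finset.prod_ite_zero]
    simp [funext_iff, eq_comm]
  rw [trace_pure_mul, sum_eq_sum_embedIdx S, Finset.sum_comm]
  push_cast
  refine Finset.sum_congr rfl fun k _ => ?_
  rw [← Complex.mul_conj', map_sum, Finset.sum_mul_sum]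
  refine Finset.sum_congr rfl fun u _ => ?_
  rw [sum_eq_sum_embedIdx S]
  refine Finset.sum_congr rfl fun v _ => ?_
  simp only [sicProj, localOp_apply, hin, hout, hdelta, Matrix.vecMulVec_apply, mul_ite, mul_one,
    mul_zero, Finset.sum_ite_eq, Finset.mem_univ, if_true, Finset.prod_mul_distrib]
  simp
  ring

theorem sicBorn_eq (ψ : (Fin n → Fin 2) → ℂ) (S : Finset (Fin n))
    (q : {i : Fin n // i ∈ S} → Fin 4) :
    sicBorn (Matrix.vecMulVec ψ (star ψ)) S q =
      ∑ k, ‖∑ u, ψ (embedIdx S u k) * star (∏ i, sicTilde (q i) (u i))‖ ^ 2 := by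
  rw [sicBorn, trace_pure_mul_sicProj, Complex.ofReal_re]

theorem ofReal_sicBorn (ψ : (Fin n → Fin 2) → ℂ) (S : Finset (Fin n))
    (q : {i : Fin n // i ∈ S} → Fin 4) :
    (sicBorn (Matrix.vecMulVec ψ (star ψ)) S q : ℂ) =
      ∑ x, ∑ y, ψ x * star (ψ y) * sicProj S q y x := by
  rw [sicBorn_eq, ← trace_pure_mul_sicProj, trace_pure_mul]

theorem sicBorn_nonneg (ψ : (Fin n → Fin 2) → ℂ) (S : Finset (Fin n))
    (q : {i : Fin n // i ∈ S} → Fin 4) : 0 ≤ sicBorn (Matrix.vecMulVec ψ (star ψ)) S q := by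
  rw [sicBorn_eq]
  positivity

theorem sicBorn_le {ψ : (Fin n → Fin 2) → ℂ} (hψ : (∑ x, star (ψ x) * ψ x) = 1)
    (S : Finset (Fin n)) (q : {i : Fin n // i ∈ S} → Fin 4) :
    sicBorn (Matrix.vecMulVec ψ (star ψ)) S q ≤ (1 / 2) ^ S.card := by
  rw [sicBorn_eq]
  have hΦ : ∑ u : {i : Fin n // i ∈ S} → Fin 2, ‖star (∏ i, sicTilde (q i) (u i))‖ ^ 2
      = (1 / 2) ^ S.card := by
    simp only [norm_star, norm_prod, ← Finset.prod_pow]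
    rw [sum_prod_pi (fun i a => ‖sicTilde (q i) a‖ ^ 2)]
    simp only [sum_norm_sq_sicTilde]
    simp
  calc _ ≤ ∑ k, (∑ u, ‖ψ (embedIdx S u k)‖ ^ 2) * (1 / 2) ^ S.card :=
        Finset.sum_le_sum fun k _ => (norm_sum_mul_sq_le _ _ _).trans_eq (by rw [hΦ])
    _ = _ := by
        rw [← Finset.sum_mul, Finset.sum_comm, ← sum_eq_sum_embedIdx S (fun x => ‖ψ x‖ ^ 2),
          sum_norm_sq_eq_one hψ, one_mul]

theorem sum_sicBorn {ψ : (Fin n → Fin 2) → ℂ} (hψ : (∑ x, star (ψ x) * ψ x) = 1)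
    (S : Finset (Fin n)) : ∑ q, sicBorn (Matrix.vecMulVec ψ (star ψ)) S q = 1 := by
  have : ((∑ q, sicBorn (Matrix.vecMulVec ψ (star ψ)) S q : ℝ) : ℂ) = 1 := by
    push_cast
    simp only [ofReal_sicBorn]
    rw [Finset.sum_comm, ← hψ]
    refine Finset.sum_congr rfl fun x _ => ?_
    rw [Finset.sum_comm]
    simp only [← Finset.mul_sum, sum_sicProj]
    simp [mul_comm]
  exact_mod_cast this

theorem sum_sicBorn_sq (ψ : (Fin n → Fin 2) → ℂ) (S : Finset (Fin n)) :
    ∑ q, sicBorn (Matrix.vecMulVec ψ (star ψ)) S q ^ 2 = (1 / 6) ^ S.card *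
      ∑ α ∈ S.powerset, (Matrix.trace (reduced (Matrix.vecMulVec ψ (star ψ)) α *
        reduced (Matrix.vecMulVec ψ (star ψ)) α)).re := by
  have : ((∑ q, sicBorn (Matrix.vecMulVec ψ (star ψ)) S q ^ 2 : ℝ) : ℂ) = (1 / 6 : ℂ) ^ S.card *
      ∑ α ∈ S.powerset, Matrix.trace (reduced (Matrix.vecMulVec ψ (star ψ)) α *
        reduced (Matrix.vecMulVec ψ (star ψ)) α) := by
    push_cast
    simp only [ofReal_sicBorn, sq, trace_reduced_sq]
    calc _ = ∑ x, ∑ x', ∑ y, ∑ y', ψ x * star (ψ y) * (ψ x' * star (ψ y')) *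
            ∑ q, sicProj S q y x * sicProj S q y' x' := by
          simp only [Finset.sum_mul_sum]
          simp only [Finset.mul_sum]
          refine Finset.sum_comm.trans ?_
          refine Finset.sum_congr rfl fun x _ => ?_
          refine Finset.sum_comm.trans ?_
          refine Finset.sum_congr rfl fun x' _ => ?_
          refine Finset.sum_comm.trans ?_
          refine Finset.sum_congr rfl fun y _ => ?_
          refine Finset.sum_comm.trans ?_
          refine Finset.sum_congr rfl fun y' _ => Finset.sum_congr rfl fun q _ => ?_
          ring
      _ = _ := by
          simp only [sum_sicProj_mul, Finset.mul_sum]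
          refine Eq.trans ?_ Finset.sum_comm
          refine Finset.sum_congr rfl fun x _ => ?_
          refine Eq.trans ?_ Finset.sum_comm
          refine Finset.sum_congr rfl fun x' _ => ?_
          have hα : ∀ α ∈ S.powerset, (1 / 6 : ℂ) ^ S.card *
              (ψ x * ψ x' * star (ψ (α.piecewise x' x)) * star (ψ (α.piecewise x x'))) =
              ∑ y, ∑ y', ψ x * star (ψ y) * (ψ x' * star (ψ y')) * ((1 / 6 : ℂ) ^ S.card *
                if y = α.piecewise x' x ∧ y' = α.piecewise x x' then 1 else 0) := by
            intro α _
            simp only [ite_and, mul_ite, mul_one, mul_zero, Finset.sum_ite_irrel,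
              Finset.sum_const_zero, Finset.sum_ite_eq', Finset.mem_univ, if_true]
            ring
          rw [Finset.sum_congr rfl hα]
          refine Eq.trans ?_ Finset.sum_comm
          refine Finset.sum_congr rfl fun y _ => ?_
          exact Finset.sum_comm
  have h2 := congrArg Complex.re this
  rw [Complex.ofReal_re] at h2
  rw [h2, ← Complex.re_sum, show (1 / 6 : ℂ) ^ S.card = (((1 / 6 : ℝ) ^ S.card : ℝ) : ℂ) by
    push_cast; rfl, Complex.re_ofReal_mul]

theorem CE_eq_one_sub (ψ : (Fin n → Fin 2) → ℂ) (S : Finset (Fin n)) :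
    CE (Matrix.vecMulVec ψ (star ψ)) S =
      1 - 3 ^ S.card * ∑ q, sicBorn (Matrix.vecMulVec ψ (star ψ)) S q ^ 2 := by
  rw [CE, sum_sicBorn_sq, ← mul_assoc, ← mul_pow]
  norm_num

theorem sum_sicBorn_sq_le {ψ : (Fin n → Fin 2) → ℂ} (hψ : (∑ x, star (ψ x) * ψ x) = 1)
    (S : Finset (Fin n)) :
    ∑ q, sicBorn (Matrix.vecMulVec ψ (star ψ)) S q ^ 2 ≤ (1 / 3) ^ S.card := by
  rw [sum_sicBorn_sq]
  have h : ∑ α ∈ S.powerset, (Matrix.trace (reduced (Matrix.vecMulVec ψ (star ψ)) α *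
      reduced (Matrix.vecMulVec ψ (star ψ)) α)).re ≤ 2 ^ S.card := by
    refine (Finset.sum_le_sum fun α _ => purity_re_le_one hψ α).trans (le_of_eq ?_)
    simp
  calc _ ≤ (1 / 6 : ℝ) ^ S.card * 2 ^ S.card := by gcongr
    _ = _ := by rw [← mul_pow]; norm_num

end Tomography

section MedianOfMeans

theorem le_two_mul_card_of_isMedian {m : ℕ} {x : Fin m → ℝ} {m₀ c ε : ℝ} (h : IsMedian x m₀)
    (hε : ε ≤ |m₀ - c|) : m ≤ 2 * (Finset.univ.filter fun i => ε ≤ |x i - c|).card := by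
  rcases le_abs.1 hε with h' | h'
  · refine h.2.trans (Nat.mul_le_mul_left 2 (Finset.card_le_card fun i hi => ?_))
    simp only [Finset.mem_filter, Finset.mem_univ, true_and] at hi ⊢
    exact le_abs.2 (Or.inl (by linarith))
  · refine h.1.trans (Nat.mul_le_mul_left 2 (Finset.card_le_card fun i hi => ?_))
    simp only [Finset.mem_filter, Finset.mem_univ, true_and] at hi ⊢
    exact le_abs.2 (Or.inr (by linarith))

variable {Q : Type*} [Fintype Q]

theorem iidMean_prod_batches {β κ : Type*} [Fintype β] [DecidableEq β] [Fintype κ] [DecidableEq κ]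
    (P : Q → ℝ) (G : (κ → Q) → ℝ) :
    iidMean P (fun ω : β × κ → Q => ∏ b, G fun k => ω (b, k)) =
      iidMean P G ^ Fintype.card β := by
  simp only [iidMean]
  rw [← (Equiv.curry β κ Q).symm.sum_comp]
  simp only [Fintype.prod_prod_type, ← Finset.prod_mul_distrib]
  refine (sum_prod_pi (fun (_ : β) (η : κ → Q) => (∏ k, P (η k)) * G η)).trans ?_
  rw [Finset.prod_const, Finset.card_univ]

variable [MeasurableSpace Q] [MeasurableSingletonClass Q]

theorem weightedDirac_singleton (P : Q → ℝ) (q : Q) :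
    (∑ q, ENNReal.ofReal (P q) • Measure.dirac q : Measure Q) {q} = ENNReal.ofReal (P q) := by
  classical
  simp [Measure.finsetSum_apply, Set.indicator_apply]

theorem isProbabilityMeasure_weightedDirac {P : Q → ℝ} (hP0 : ∀ q, 0 ≤ P q)
    (hP1 : ∑ q, P q = 1) :
    IsProbabilityMeasure (∑ q, ENNReal.ofReal (P q) • Measure.dirac q : Measure Q) := by
  constructor
  simp [Measure.finsetSum_apply, ← ENNReal.ofReal_sum_of_nonneg fun q _ => hP0 q, hP1]

open Classical in
theorem pi_weightedDirac_apply {ι : Type*} [Fintype ι] [DecidableEq ι] {P : Q → ℝ}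
    (hP0 : ∀ q, 0 ≤ P q) (hP1 : ∑ q, P q = 1) (A : Set (ι → Q)) :
    (Measure.pi fun _ : ι => ∑ q, ENNReal.ofReal (P q) • Measure.dirac q) A =
      ENNReal.ofReal (iidMean P fun ω => if ω ∈ A then 1 else 0) := by
  have := isProbabilityMeasure_weightedDirac hP0 hP1
  have hA : A = ((Finset.univ.filter fun ω => ω ∈ A : Finset (ι → Q)) : Set (ι → Q)) := by
    ext; simp
  rw [hA, ← sum_measure_singleton]
  simp only [Measure.pi_singleton, weightedDirac_singleton,
    ← ENNReal.ofReal_prod_of_nonneg fun (i : ι) _ => hP0 _]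
  rw [← ENNReal.ofReal_sum_of_nonneg fun ω _ => Finset.prod_nonneg fun i _ => hP0 _]
  simp [iidMean, Finset.sum_filter]

theorem sqrt_three_div_two_le_exp : Real.sqrt 3 / 2 ≤ Real.exp (-(1 / 8)) := by
  refine le_of_sq_le_sq ?_ (Real.exp_pos _).le
  rw [div_pow, Real.sq_sqrt (by norm_num), ← Real.exp_nat_mul]
  have := Real.add_one_le_exp (((2 : ℕ) : ℝ) * -(1 / 8))
  norm_num at this ⊢
  linarith

/-- If each batch estimate fails with probability at most `1/4`, then a median over `N`
batches fails with probability at most `exp (-N/8)`. -/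
theorem pi_median_le {N K : ℕ} {P : Q → ℝ} (hP0 : ∀ q, 0 ≤ P q) (hP1 : ∑ q, P q = 1)
    (g : (Fin K → Q) → ℝ) (c ε : ℝ)
    (hg : iidMean P (fun η => if ε ≤ |g η - c| then 1 else 0) ≤ 1 / 4)
    (med : (Fin N → ℝ) → ℝ) (hmed : ∀ x, IsMedian x (med x)) :
    (Measure.pi fun _ : Fin N × Fin K => ∑ q, ENNReal.ofReal (P q) • Measure.dirac q)
      {ω | ε ≤ |med (fun b => g fun k => ω (b, k)) - c|} ≤
        ENNReal.ofReal (Real.exp (-(N / 8))) := by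
  classical
  rw [pi_weightedDirac_apply hP0 hP1]
  refine ENNReal.ofReal_le_ofReal ?_
  set t := Real.sqrt 3 with ht
  have ht1 : 1 ≤ t := Real.one_le_sqrt.2 (by norm_num)
  have ht0 : 0 < t := by linarith
  have htsq : t ^ 2 = 3 := Real.sq_sqrt (by norm_num)
  have htinv : t⁻¹ = t / 3 := by field_simp; linarith
  set G : (Fin K → Q) → ℝ := fun η => if ε ≤ |g η - c| then t else t⁻¹ with hG
  have hmean : iidMean P G ≤ t / 2 := by
    have hdec : G = fun η => t⁻¹ * 1 - (t⁻¹ - t) * if ε ≤ |g η - c| then (1 : ℝ) else 0 := by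
      funext η
      simp only [hG]
      split_ifs <;> ring
    rw [hdec, iidMean_sub, iidMean_const_mul, iidMean_const_mul, iidMean_one hP1, htinv]
    nlinarith
  have hmean0 : 0 ≤ iidMean P G :=
    Finset.sum_nonneg fun η _ => mul_nonneg (Finset.prod_nonneg fun k _ => hP0 _)
      (by simp only [hG]; split_ifs <;> positivity)
  calc _ ≤ iidMean P (fun ω : Fin N × Fin K → Q => ∏ b, G fun k => ω (b, k)) := by
        refine iidMean_mono hP0 fun ω => ?_
        simp only [hG, Set.mem_ofPred_eq]
        rw [Finset.prod_ite, Finset.prod_const, Finset.prod_const]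
        split_ifs with hω
        · have hcard := le_two_mul_card_of_isMedian (hmed _) hω
          have hsum := Finset.card_filter_add_card_filter_not (s := Finset.univ)
            (fun b : Fin N => ε ≤ |(g fun k => ω (b, k)) - c|)
          rw [Finset.card_univ, Fintype.card_fin] at hsum
          rw [inv_pow, ← div_eq_mul_inv, one_le_div (by positivity)]
          exact pow_le_pow_right₀ ht1 (by omega)
        · positivity
    _ = iidMean P G ^ N := by rw [iidMean_prod_batches, Fintype.card_fin]
    _ ≤ Real.exp (-(1 / 8)) ^ N :=
        pow_le_pow_left₀ hmean0 (hmean.trans sqrt_three_div_two_le_exp) N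
    _ = Real.exp (-(N / 8)) := by
        rw [← Real.exp_nat_mul]
        congr 1
        ring

end MedianOfMeans

section BatchSize

/-- The optimized batch size solves the quadratic inequality required by Chebyshev's bound. -/
theorem quadratic_of_le_root {a d K : ℝ} (hd : 0 < d)
    (hK : 1 / 2 * (a + 1) + 1 / 2 * Real.sqrt ((a - 1) ^ 2 + d) ≤ K) :
    1 < K ∧ a * (K - 1) + d / 4 ≤ K * (K - 1) := by
  set r := Real.sqrt ((a - 1) ^ 2 + d) with hr
  have hr0 : 0 ≤ r := Real.sqrt_nonneg _
  have hrsq : r ^ 2 = (a - 1) ^ 2 + d := Real.sq_sqrt (by positivity)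
  have hlt : 1 - a < r := by
    refine (le_abs_self _).trans_lt (abs_lt_of_sq_lt_sq ?_ hr0)
    nlinarith
  exact ⟨by linarith, by nlinarith⟩

theorem collision_chebyshev {Q : Type*} [Fintype Q] [DecidableEq Q] {P : Q → ℝ}
    (hP0 : ∀ q, 0 ≤ P q) (hP1 : ∑ q, P q = 1) {s K : ℕ} {ε : ℝ} (hε : 0 < ε)
    (h2 : ∑ q, P q ^ 2 ≤ (1 / 3) ^ s) (hmax : ∀ q, P q ≤ (1 / 2) ^ s) (hK1 : (1 : ℝ) < K)
    (hK : 16 / ε ^ 2 * (3 / 2 : ℝ) ^ s * (K - 1) + 32 / ε ^ 2 * (3 : ℝ) ^ s / 4 ≤ K * (K - 1)) :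
    iidMean P (fun η : Fin K → Q => if ε ≤ |1 - (3 : ℝ) ^ s *
        ((1 / ((K : ℝ) * ((K : ℝ) - 1))) * ∑ k : Fin K, ∑ k' : Fin K,
          if k ≠ k' ∧ η k = η k' then 1 else 0) - (1 - 3 ^ s * ∑ q, P q ^ 2)|
        then 1 else 0) ≤ 1 / 4 := by
  set θ := ∑ q, P q ^ 2 with hθ
  have hKK : 0 < (K : ℝ) * (K - 1) := mul_pos (by linarith) (by linarith)
  have h3 : ∑ q, P q ^ 3 ≤ (1 / 6) ^ s :=
    calc ∑ q, P q ^ 3 ≤ ∑ q, (1 / 2) ^ s * P q ^ 2 := Finset.sum_le_sum fun q _ => by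
          nlinarith [hmax q, sq_nonneg (P q)]
      _ ≤ (1 / 2) ^ s * (1 / 3) ^ s := by rw [← Finset.mul_sum]; gcongr
      _ = _ := by rw [← mul_pow]; norm_num
  set D : (Fin K → Q) → ℝ := fun η => ∑ p ∈ (Finset.univ : Finset (Fin K)).offDiag,
    (collision p.1 p.2 η - θ) with hD
  have hDsum : ∀ η : Fin K → Q, (∑ k : Fin K, ∑ k' : Fin K,
      if k ≠ k' ∧ η k = η k' then (1 : ℝ) else 0) = D η + K * (K - 1) * θ := by
    intro η
    have hoff : (Finset.univ : Finset (Fin K)).offDiag =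
        Finset.univ.filter fun r : Fin K × Fin K => r.1 ≠ r.2 := by
      ext r; simp
    have hconst := sum_offDiag_fst (ι := Fin K) (fun _ => θ)
    simp only [Fintype.card_fin] at hconst
    simp only [hD, Finset.sum_sub_distrib, hconst]
    rw [hoff, Finset.sum_filter, Fintype.sum_prod_type]
    simp only [collision, ite_and]
    simp
    ring
  set M : ℝ := ((3 : ℝ) ^ s / (K * (K - 1) * ε)) ^ 2 with hM
  have hle : iidMean P (fun η : Fin K → Q => if ε ≤ |1 - (3 : ℝ) ^ s *
        ((1 / ((K : ℝ) * ((K : ℝ) - 1))) * ∑ k : Fin K, ∑ k' : Fin K,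
          if k ≠ k' ∧ η k = η k' then 1 else 0) - (1 - 3 ^ s * θ)|
        then 1 else 0) ≤ iidMean P (fun η => M * D η ^ 2) := by
    refine iidMean_mono hP0 fun η => ?_
    split_ifs with h
    · have hval : (1 - (3 : ℝ) ^ s * ((1 / ((K : ℝ) * ((K : ℝ) - 1))) * ∑ k : Fin K, ∑ k' : Fin K,
          if k ≠ k' ∧ η k = η k' then 1 else 0) - (1 - 3 ^ s * θ))
          = -(ε * ((3 : ℝ) ^ s / (K * (K - 1) * ε) * D η)) := by
        rw [hDsum]
        have hK0 : (K : ℝ) ≠ 0 := by linarith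
        have hK0' : (K : ℝ) - 1 ≠ 0 := by linarith
        field_simp
        ring
      rw [hval, abs_neg, abs_mul, abs_of_pos hε] at h
      have h1 : 1 ≤ |(3 : ℝ) ^ s / (K * (K - 1) * ε) * D η| := by
        by_contra hlt
        push Not at hlt
        nlinarith
      rw [hM, ← mul_pow, ← sq_abs]
      exact one_le_pow₀ h1
    · positivity
  refine hle.trans ?_
  rw [iidMean_const_mul]
  have hvar := iidMean_sq_collision_sum_le (ι := Fin K) hP0 hP1
  rw [Fintype.card_fin, ← hθ] at hvar
  have h9τ : (9 : ℝ) ^ s * ∑ q, P q ^ 3 ≤ (3 / 2) ^ s :=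
    calc _ ≤ (9 : ℝ) ^ s * (1 / 6) ^ s := by gcongr
      _ = _ := by rw [← mul_pow]; norm_num
  have h9θ : (9 : ℝ) ^ s * θ ≤ 3 ^ s :=
    calc _ ≤ (9 : ℝ) ^ s * (1 / 3) ^ s := by gcongr
      _ = _ := by rw [← mul_pow]; norm_num
  have hK' : 4 * ((K : ℝ) - 1) * (3 / 2) ^ s + 2 * 3 ^ s ≤ ε ^ 2 / 4 * (K * (K - 1)) := by
    have := mul_le_mul_of_nonneg_left hK (by positivity : 0 ≤ ε ^ 2 / 4)
    refine le_trans (le_of_eq ?_) this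
    field_simp
    ring
  have hM' : M = 9 ^ s / ((K * (K - 1)) ^ 2 * ε ^ 2) := by
    rw [hM, div_pow, mul_pow, ← pow_mul, mul_comm s 2, pow_mul]
    norm_num
  calc M * iidMean P (fun η => D η ^ 2)
      ≤ M * ((K : ℝ) * (K - 1) * (4 * (K - 1) * ∑ q, P q ^ 3 + 2 * θ)) :=
        mul_le_mul_of_nonneg_left hvar (sq_nonneg _)
    _ = (4 * (K - 1) * (9 ^ s * ∑ q, P q ^ 3) + 2 * (9 ^ s * θ)) / (K * (K - 1) * ε ^ 2) := by
        rw [hM']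
        have hK0 : (K : ℝ) ≠ 0 := by linarith
        have hK0' : (K : ℝ) - 1 ≠ 0 := by linarith
        field_simp
    _ ≤ 1 / 4 := by
        rw [div_le_iff₀ (by positivity)]
        have : 4 * ((K : ℝ) - 1) * (9 ^ s * ∑ q, P q ^ 3) ≤ 4 * (K - 1) * (3 / 2) ^ s :=
          mul_le_mul_of_nonneg_left h9τ (by linarith)
        linarith

end BatchSize

/-- **CE estimation via SIC data and median-of-means with the optimized batch size
`K_opt`**: with `N_B = ⌈8 log(1/δ)⌉` batches of `K_opt` i.i.d. SIC outcomes each, any median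
of the batch estimates is `ε`-close to `C_ψ(S)` with probability at least `1 - δ`. -/
theorem SIC_MoM_estimator_Kopt (n : ℕ) (ψ : (Fin n → Fin 2) → ℂ)
    (hψ : (∑ x, star (ψ x) * ψ x) = 1)
    (S : Finset (Fin n)) (hS : S.Nonempty) (hs1 : 1 ≤ S.card)
    (ε δ : ℝ) (hε : 0 < ε) (hδ0 : 0 < δ) (hδ1 : δ < 1) (NB Kopt : ℕ)
    (hNB : NB = ⌈8 * Real.log (1 / δ)⌉₊)
    (hKopt : Kopt = ⌈(1 / 2 : ℝ) * (16 / ε ^ 2 * (3 / 2 : ℝ) ^ S.card + 1)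
        + (1 / 2 : ℝ) * Real.sqrt ((16 / ε ^ 2 * (3 / 2 : ℝ) ^ S.card - 1) ^ 2
            + 32 / ε ^ 2 * (3 : ℝ) ^ S.card)⌉₊)
    (med : (Fin NB → ℝ) → ℝ) (hmed : ∀ x, IsMedian x (med x)) :
    (Measure.pi fun _ : Fin NB × Fin Kopt =>
        sicMeasure (Matrix.vecMulVec ψ (star ψ)) S)
      {ω | ε ≤ |med (fun b => 1 - (3 : ℝ) ^ S.card *
              ((1 / ((Kopt : ℝ) * ((Kopt : ℝ) - 1))) * ∑ k : Fin Kopt, ∑ k' : Fin Kopt,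
                if k ≠ k' ∧ ω (b, k) = ω (b, k') then 1 else 0))
            - CE (Matrix.vecMulVec ψ (star ψ)) S|}
      ≤ ENNReal.ofReal δ := by
  have hP0 := sicBorn_nonneg ψ S
  have hP1 := sum_sicBorn hψ S
  obtain ⟨hK1, hK⟩ := quadratic_of_le_root (by positivity) (hKopt ▸ Nat.le_ceil _)
  have hbatch := collision_chebyshev hP0 hP1 hε (sum_sicBorn_sq_le hψ S) (sicBorn_le hψ S) hK1 hK
  rw [← CE_eq_one_sub] at hbatch
  refine (pi_median_le hP0 hP1 _ _ ε hbatch med hmed).trans (ENNReal.ofReal_le_ofReal ?_)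
  have hlog : 8 * Real.log (1 / δ) ≤ NB := hNB ▸ Nat.le_ceil _
  rw [one_div, Real.log_inv] at hlog
  calc Real.exp (-(NB / 8)) ≤ Real.exp (Real.log δ) := Real.exp_le_exp.2 (by linarith)
    _ = δ := Real.exp_log hδ0
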